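/- Let ℓ : ℝ → ℝ satisfy the assumptions below, and let B > 0 satisfy ηρ + ηB ≤ B. If x ≠ 0, y ≠ 0, |x| ≤ B and |y| ≤ B, then the SAM update (x', y') of (x, y) satisfies |x'| ≤ B and |y'| ≤ B. In particular, once SAM enters the box [−B, B]², its iterates never leave it. -/

import Mathlib

/-!
The subtracted quantity `w = ηg(y + ρxz)` has the same sign as `x` and satisfies
`|w| ≤ η(B + ρ) ≤ B`, so `x − w` stays in `[−B, B]`.

For the size: `|g| ≤ 1` because `ℓ` is 1-Lipschitz, and `|xz| ≤ 1` by the normalization of `z`.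
For the sign: `z` has the sign of `xy`, hence so do `x(y + ρxz) = xy + ρx²z` and the product
`(x + ρyz)(y + ρxz) = xy(1 + ρ²z²) + ρz(x² + y²)`. By convexity `ℓ'` is monotone, and it vanishes
at the minimizer `0`, so `g` has the sign of `xy` too. The argument for `y` is symmetric.
-/

/-- Subtracting from `x` a number of the same sign cannot leave an interval `[-B, B]`
containing both. -/
lemma abs_sub_le_of_mul_nonneg {x w B : ℝ} (hx : |x| ≤ B) (hw : |w| ≤ B) (h : 0 ≤ x * w) :
    |x - w| ≤ B := by
  rw [abs_le] at *
  rcases mul_nonneg_iff.1 h with ⟨h1, h2⟩ | ⟨h1, h2⟩ <;> constructor <;> linarith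

lemma abs_mul_sign_div_sqrt_le_one (x y s : ℝ) (hx : x ≠ 0) :
    |x * (Real.sign s / Real.sqrt (x ^ 2 + y ^ 2))| ≤ 1 := by
  have hpos : 0 < Real.sqrt (x ^ 2 + y ^ 2) := Real.sqrt_pos.2 (by positivity)
  have hs : |Real.sign s| ≤ 1 := by
    rcases Real.sign_apply_eq s with h | h | h <;> rw [h] <;> norm_num
  have hxs : |x| ≤ Real.sqrt (x ^ 2 + y ^ 2) :=
    Real.abs_le_sqrt (by nlinarith [sq_nonneg y])
  rw [← mul_div_assoc, abs_div, abs_mul, abs_of_pos hpos, div_le_one hpos]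
  exact (mul_le_of_le_one_right (abs_nonneg x) hs).trans hxs

/-- The displacement of one coordinate `x` of the SAM update keeps it in the box, given that
the gradient factor `g` and the perturbation direction `z` both carry the sign of `x * y`. -/
lemma sam_coordinate_bound {η ρ B x y z g : ℝ} (hη : 0 < η) (hρ : 0 ≤ ρ)
    (hbox : η * ρ + η * B ≤ B) (hxB : |x| ≤ B) (hyB : |y| ≤ B)
    (hg1 : |g| ≤ 1) (hxz : |x * z| ≤ 1)
    (hs : (0 ≤ x * y ∧ 0 ≤ z ∧ 0 ≤ g) ∨ (x * y ≤ 0 ∧ z ≤ 0 ∧ g ≤ 0)) :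
    |x - η * g * (y + ρ * x * z)| ≤ B := by
  apply abs_sub_le_of_mul_nonneg hxB
  · have hv : |y + ρ * x * z| ≤ B + ρ := by
      calc |y + ρ * x * z| ≤ |y| + |ρ * x * z| := abs_add_le _ _
        _ = |y| + ρ * |x * z| := by rw [mul_assoc, abs_mul ρ, abs_of_nonneg hρ]
        _ ≤ B + ρ := add_le_add hyB (mul_le_of_le_one_right hρ hxz)
    calc |η * g * (y + ρ * x * z)| = η * (|g| * |y + ρ * x * z|) := by
          rw [abs_mul, abs_mul, abs_of_pos hη, mul_assoc]
      _ ≤ η * |y + ρ * x * z| :=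
          mul_le_mul_of_nonneg_left (mul_le_of_le_one_left (abs_nonneg _) hg1) hη.le
      _ ≤ η * (B + ρ) := mul_le_mul_of_nonneg_left hv hη.le
      _ ≤ B := by linarith
  · have key : x * (η * g * (y + ρ * x * z)) = η * (g * (x * y + ρ * x ^ 2 * z)) := by ring
    rw [key]
    refine mul_nonneg hη.le ?_
    have hc : 0 ≤ ρ * x ^ 2 := by positivity
    rcases hs with ⟨h1, h2, h3⟩ | ⟨h1, h2, h3⟩
    · exact mul_nonneg h3 (add_nonneg h1 (mul_nonneg hc h2))
    · exact mul_nonneg_of_nonpos_of_nonpos h3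
        (add_nonpos h1 (mul_nonpos_of_nonneg_of_nonpos hc h2))

/-- **SAM on `L(x,y) = ℓ(xy)` never leaves the box `[−B, B]²` once it enters.**
Here `ℓ` is differentiable, convex, even, 1-Lipschitz, minimized at `0`, with a
constant `c > 0` such that `|ℓ'(s)| ≤ |s|` and `|ℓ'(s)| ≥ |s|/2` for `|s| ≤ c`, and
`|ℓ'(s)| ≥ c/2` for `|s| ≥ c`. The SAM update with `z = sgn(xy)/√(x² + y²)` and
`g = ℓ'((x + ρyz)(y + ρxz))` is `x' = x − ηg(y + ρxz)`, `y' = y − ηg(x + ρyz)`.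
If `B > 0` satisfies `ηρ + ηB ≤ B` and `|x|, |y| ≤ B`, then `|x'|, |y'| ≤ B`. -/
theorem sam_single_neuron_box_invariant
    (ℓ : ℝ → ℝ) (c : ℝ) (hc : 0 < c)
    (hdiff : Differentiable ℝ ℓ)
    (hconv : ConvexOn ℝ Set.univ ℓ)
    (heven : ∀ s, ℓ (-s) = ℓ s)
    (hlip : LipschitzWith 1 ℓ)
    (hmin : ∀ s, ℓ 0 ≤ ℓ s)
    (hder_ub : ∀ s, |s| ≤ c → |deriv ℓ s| ≤ |s|)
    (hder_lb : ∀ s, |s| ≤ c → |s| / 2 ≤ |deriv ℓ s|)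
    (hder_tail : ∀ s, c ≤ |s| → c / 2 ≤ |deriv ℓ s|)
    (η ρ : ℝ) (hη : 0 < η) (hρ : 0 ≤ ρ)
    (B : ℝ) (hB : 0 < B) (hbox : η * ρ + η * B ≤ B)
    (x y z g x' y' : ℝ) (hx : x ≠ 0) (hy : y ≠ 0)
    (hxB : |x| ≤ B) (hyB : |y| ≤ B)
    (hz : z = Real.sign (x * y) / Real.sqrt (x ^ 2 + y ^ 2))
    (hg : g = deriv ℓ ((x + ρ * y * z) * (y + ρ * x * z)))
    (hx' : x' = x - η * g * (y + ρ * x * z))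
    (hy' : y' = y - η * g * (x + ρ * y * z)) :
    |x'| ≤ B ∧ |y'| ≤ B := by
  have hmono : Monotone (deriv ℓ) := by
    rw [← monotoneOn_univ]
    exact hconv.monotoneOn_deriv fun t _ => hdiff t
  have h0 : deriv ℓ 0 = 0 :=
    IsLocalMin.deriv_eq_zero (Filter.Eventually.of_forall hmin)
  have hg1 : |g| ≤ 1 := by
    rw [hg]
    simpa using norm_deriv_le_of_lipschitz (x₀ := (x + ρ * y * z) * (y + ρ * x * z)) hlip
  have hxz : |x * z| ≤ 1 := hz ▸ abs_mul_sign_div_sqrt_le_one x y (x * y) hx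
  have hyz : |y * z| ≤ 1 := by
    rw [hz, add_comm (x ^ 2)]
    exact abs_mul_sign_div_sqrt_le_one y x (x * y) hy
  have hexp : (x + ρ * y * z) * (y + ρ * x * z)
      = x * y * (1 + ρ ^ 2 * z ^ 2) + ρ * (x ^ 2 + y ^ 2) * z := by ring
  have hc1 : 0 ≤ 1 + ρ ^ 2 * z ^ 2 := by positivity
  have hc2 : 0 ≤ ρ * (x ^ 2 + y ^ 2) := by positivity
  have hs : (0 ≤ x * y ∧ 0 ≤ z ∧ 0 ≤ g) ∨ (x * y ≤ 0 ∧ z ≤ 0 ∧ g ≤ 0) := by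
    rcases lt_or_gt_of_ne (mul_ne_zero hx hy) with h | h
    · right
      have hz0 : z ≤ 0 := by
        rw [hz, Real.sign_of_neg h]
        exact div_nonpos_of_nonpos_of_nonneg (by norm_num) (Real.sqrt_nonneg _)
      refine ⟨h.le, hz0, ?_⟩
      rw [hg, ← h0, hexp]
      exact hmono (add_nonpos (mul_nonpos_of_nonpos_of_nonneg h.le hc1)
        (mul_nonpos_of_nonneg_of_nonpos hc2 hz0))
    · left
      have hz0 : 0 ≤ z := by
        rw [hz, Real.sign_of_pos h]
        positivity
      refine ⟨h.le, hz0, ?_⟩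
      rw [hg, ← h0, hexp]
      exact hmono (add_nonneg (mul_nonneg h.le hc1) (mul_nonneg hc2 hz0))
  rw [hx', hy']
  exact ⟨sam_coordinate_bound hη hρ hbox hxB hyB hg1 hxz hs,
    sam_coordinate_bound hη hρ hbox hyB hxB hg1 hyz (by rwa [mul_comm y x])⟩
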